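/- Let N ≥ 3, a > 0, ω² = 1+2a, μ = a/ω² < 1/2, let τ be the N×N cyclic permutation matrix and A = ω²(I − μ(τ + τᵀ)). Then A is a symmetric positive-definite circulant matrix; the linear change of coordinates q = A^{1/4}x, p = A^{−1/4}y is canonical and transforms H0(x,y) = ½ y·y + ½ x·Ax into H_Ω + Z0 with {H_Ω, Z0} = 0, where Ω is the average of the square roots of the eigenvalues of A, H_Ω = (Ω/2) Σ_{j=1}^N (q_j² + p_j²), and Z0 = ½ p·Bp + ½ q·Bq with B = A^{1/2} − Ω I. Moreover the first row of A^{1/4} satisfies |(A^{1/4})_{1,j}| ≤ 2√ω (2μ)^{j−1} for 1 ≤ j ≤ ⌊N/2⌋ + 1. -/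

import Mathlib

open Matrix

/-- Poisson bracket of two functions on the phase space `ℝ^N × ℝ^N` (coordinates
`(q,p)`), defined through the Fréchet derivative:
`{F,G}(z) = Σ_l (∂F/∂q_l ∂G/∂p_l − ∂F/∂p_l ∂G/∂q_l)(z)`. -/
noncomputable def pb (N : ℕ) (F G : (Fin N → ℝ) × (Fin N → ℝ) → ℝ)
    (z : (Fin N → ℝ) × (Fin N → ℝ)) : ℝ :=
  ∑ l : Fin N,
    (fderiv ℝ F z (Pi.single l 1, 0) * fderiv ℝ G z (0, Pi.single l 1) -
      fderiv ℝ F z (0, Pi.single l 1) * fderiv ℝ G z (Pi.single l 1, 0))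

/-! Write `S = τ + τᵀ`. By the spectral theorem the positive `m`-th root of `wᵐ (I - μ S)` is `w`
times the binomial series `∑ₖ binom(1/m, k) (-μ S)ᵏ`. A walk on the `N`-cycle needs at least `j - 1`
steps from `1` to `j`, so the terms with `k < j - 1` vanish at the entry `(1, j)`; the others are at
most `|binom(1/m, k)| (2|μ|)ᵏ` there, because `S / 2` is stochastic. Finally
`∑ₖ |binom(1/m, k)| ≤ 2`, since for `k ≥ 1` the absolute values telescope. -/

section BinomialCoefficients

lemma abs_choose_succ {α : ℝ} (hα₀ : 0 ≤ α) (hα₁ : α ≤ 1) (k : ℕ) :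
    |Ring.choose α (k + 1)| = |Ring.choose (α - 1) k| - |Ring.choose (α - 1) (k + 1)| := by
  have pascal : Ring.choose α (k + 1) = Ring.choose (α - 1) k + Ring.choose (α - 1) (k + 1) := by
    simpa using Ring.choose_succ_succ (α - 1) k
  have absorb : Ring.choose α (k + 1) = α / (k + 1) * Ring.choose (α - 1) k := by
    have h := Ring.choose_add_smul_choose (α - 1) k 1
    simp only [Nat.choose_one_right, Nat.cast_one, sub_add_cancel, Ring.choose_one_right,
      nsmul_eq_mul, Nat.cast_add] at h
    field_simp
    linarith
  have ratio_le : α / (k + 1) ≤ 1 :=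
    (div_le_one (by positivity)).2 (by linarith [k.cast_nonneg (α := ℝ)])
  have ratio_step : Ring.choose (α - 1) (k + 1) = -((1 - α / (k + 1)) * Ring.choose (α - 1) k) := by
    linarith
  rw [absorb, ratio_step, abs_neg, abs_mul, abs_mul, abs_of_nonneg (sub_nonneg.2 ratio_le),
    abs_of_nonneg (by positivity)]
  ring

lemma sum_abs_choose_le_two {α : ℝ} (hα₀ : 0 ≤ α) (hα₁ : α ≤ 1) (n : ℕ) :
    ∑ k ∈ Finset.range n, |Ring.choose α k| ≤ 2 := by
  have telescoped :
      ∑ k ∈ Finset.range n, |Ring.choose α (k + 1)| = 1 - |Ring.choose (α - 1) n| := by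
    simp only [abs_choose_succ hα₀ hα₁, Finset.sum_range_sub', Ring.choose_zero_right, abs_one]
  calc ∑ k ∈ Finset.range n, |Ring.choose α k|
      ≤ ∑ k ∈ Finset.range (n + 1), |Ring.choose α k| :=
        Finset.sum_le_sum_of_subset_of_nonneg (Finset.range_mono n.le_succ)
          fun _ _ _ => abs_nonneg _
    _ = 2 - |Ring.choose (α - 1) n| := by
        rw [Finset.sum_range_succ', telescoped, Ring.choose_zero_right, abs_one]
        ring
    _ ≤ 2 := sub_le_self _ (abs_nonneg _)

lemma hasSum_choose_mul_pow (α : ℝ) {t : ℝ} (ht : |t| < 1) :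
    HasSum (fun k => Ring.choose α k * t ^ k) ((1 + t) ^ α) := by
  have h := (Real.one_add_rpow_hasFPowerSeriesOnBall_zero (a := α)).hasSum (y := t)
    (by simpa [← ofReal_norm] using ht)
  simpa only [binomialSeries_apply, zero_add, List.ofFn_const, List.prod_replicate, smul_eq_mul]
    using h

lemma hasSum_choose_inv_mul_pow_sub_one {m : ℕ} (hm : m ≠ 0) {r : ℝ} (hr : 0 < r)
    (hr₂ : r ^ m < 2) :
    HasSum (fun k => Ring.choose (m : ℝ)⁻¹ k * (r ^ m - 1) ^ k) r := by
  have h := hasSum_choose_mul_pow (m : ℝ)⁻¹ (t := r ^ m - 1)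
    (abs_lt.2 ⟨by linarith [pow_pos hr m], by linarith⟩)
  rwa [add_sub_cancel, Real.pow_rpow_inv_natCast hr.le hm] at h

end BinomialCoefficients

lemma norm_le_mul_pow_of_hasSum {E : Type*} [SeminormedAddCommGroup E] {f : ℕ → E} {x : E}
    (hf : HasSum f x) {c : ℕ → ℝ} {C q : ℝ} {d : ℕ} (hq₀ : 0 ≤ q) (hq₁ : q ≤ 1)
    (hc : ∀ n, ∑ k ∈ Finset.range n, |c k| ≤ C)
    (hfc : ∀ k, ‖f k‖ ≤ |c k| * q ^ k) (hfd : ∀ k < d, f k = 0) :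
    ‖x‖ ≤ C * q ^ d := by
  have termwise (k : ℕ) : ‖f k‖ ≤ |c k| * q ^ d := by
    rcases lt_or_ge k d with hk | hk
    · rw [hfd k hk, norm_zero]
      positivity
    · exact (hfc k).trans (by gcongr ?_ * ?_; exact pow_le_pow_of_le_one hq₀ hq₁ hk)
  refine le_of_tendsto hf.tendsto_sum_nat.norm (.of_forall fun n => ?_)
  calc ‖∑ k ∈ Finset.range n, f k‖
      ≤ ∑ k ∈ Finset.range n, |c k| * q ^ d := norm_sum_le_of_le _ fun k _ => termwise k
    _ = (∑ k ∈ Finset.range n, |c k|) * q ^ d := (Finset.sum_mul ..).symm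
    _ ≤ C * q ^ d := by gcongr; exact hc n

section RootSeries

open Unitary
open scoped ComplexOrder

variable {𝕜 n : Type*} [RCLike 𝕜] [Fintype n] [DecidableEq n]

lemma eigenvalues_pow_lt_two {R : Matrix n n 𝕜} (hR : R.IsHermitian) {m : ℕ}
    (h₂ : (2 - R ^ m).PosDef) (i : n) : hR.eigenvalues i ^ m < 2 := by
  set φ := conjStarAlgAut 𝕜 _ hR.eigenvectorUnitary
  have diagonalized :
      2 - R ^ m = φ (diagonal fun i => ((2 - hR.eigenvalues i ^ m : ℝ) : 𝕜)) := by
    conv_lhs => rw [hR.spectral_theorem, ← map_pow, diagonal_pow, ← map_ofNat φ 2,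
      ← diagonal_ofNat', ← map_sub, diagonal_sub]
    push_cast
    rfl
  rw [diagonalized, conjStarAlgAut_apply, isUnit_coe.posDef_star_right_conjugate_iff,
    posDef_diagonal_iff] at h₂
  exact sub_pos.1 (by exact_mod_cast h₂ i)

lemma hasSum_choose_inv_smul_pow_sub_one {R : Matrix n n 𝕜} (hR : R.PosDef) {m : ℕ} (hm : m ≠ 0)
    (h₂ : (2 - R ^ m).PosDef) :
    HasSum (fun k => ((Ring.choose (m : ℝ)⁻¹ k : ℝ) : 𝕜) • (R ^ m - 1) ^ k) R := by
  set r := hR.isHermitian.eigenvalues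
  set φ := conjStarAlgAut 𝕜 _ hR.isHermitian.eigenvectorUnitary
  have hφ : R = φ (diagonal fun i => (r i : 𝕜)) := hR.isHermitian.spectral_theorem
  have hφ_cont : Continuous φ := by
    change Continuous fun M => φ M
    simp only [φ, conjStarAlgAut_apply]
    fun_prop
  have hdiag : HasSum
      (fun k => diagonal fun i => ((Ring.choose (m : ℝ)⁻¹ k * (r i ^ m - 1) ^ k : ℝ) : 𝕜))
      (diagonal fun i => (r i : 𝕜)) :=
    .matrix_diagonal <| Pi.hasSum.2 fun i => RCLike.hasSum_ofReal 𝕜 |>.2 <|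
      hasSum_choose_inv_mul_pow_sub_one hm (hR.eigenvalues_pos i)
        (eigenvalues_pow_lt_two hR.isHermitian h₂ i)
  have hterm (k : ℕ) : ((Ring.choose (m : ℝ)⁻¹ k : ℝ) : 𝕜) • (R ^ m - 1) ^ k =
      φ (diagonal fun i => ((Ring.choose (m : ℝ)⁻¹ k * (r i ^ m - 1) ^ k : ℝ) : 𝕜)) := by
    rw [hφ, ← map_pow, ← map_one φ, ← map_sub, ← map_pow, ← map_smul, diagonal_pow, ← diagonal_one,
      diagonal_sub, diagonal_pow, ← diagonal_smul]
    push_cast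
    rfl
  simpa only [hterm, ← hφ, Function.comp_def] using hdiag.map φ hφ_cont

end RootSeries

lemma abs_dotProduct_comp_perm_le {n : Type*} [Fintype n] (σ : Equiv.Perm n) (x : n → ℝ) :
    |x ⬝ᵥ (x ∘ σ)| ≤ x ⬝ᵥ x := by
  have sq_comp : (x ∘ σ) ⬝ᵥ (x ∘ σ) = x ⬝ᵥ x := comp_equiv_dotProduct_comp_equiv ..
  have sq_add : 0 ≤ (x + x ∘ σ) ⬝ᵥ (x + x ∘ σ) := dotProduct_self_star_nonneg (x + x ∘ σ)
  have sq_sub : 0 ≤ (x - x ∘ σ) ⬝ᵥ (x - x ∘ σ) := dotProduct_self_star_nonneg (x - x ∘ σ)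
  simp only [add_dotProduct, dotProduct_add, sub_dotProduct, dotProduct_sub, sq_comp,
    dotProduct_comm (x ∘ σ) x] at sq_add sq_sub
  exact abs_le.2 ⟨by linarith, by linarith⟩

section NeighborMatrix

variable {n : Type*} [DecidableEq n]

/-- The matrix `τ + τᵀ`, where `τ` is the permutation matrix of `σ`: it acts on `x` by
`i ↦ x (σ i) + x (σ⁻¹ i)`. For a cyclic shift it couples nearest neighbours of a periodic chain. -/
def neighborMatrix (σ : Equiv.Perm n) : Matrix n n ℝ :=
  σ.permMatrix ℝ + (σ.permMatrix ℝ)ᵀ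

lemma isSymm_neighborMatrix (σ : Equiv.Perm n) : (neighborMatrix σ).IsSymm :=
  isSymm_add_transpose_self _

lemma neighborMatrix_eq_add_transpose {σ : Equiv.Perm n} {τ : Matrix n n ℝ}
    (hτ : τ = of fun i j => if i = σ j then 1 else 0) : neighborMatrix σ = τ + τᵀ := by
  have transpose_eq : τᵀ = σ.permMatrix ℝ := by
    ext i j
    simp [hτ, PEquiv.toMatrix_apply, eq_comm]
  rw [neighborMatrix, ← transpose_eq, transpose_transpose, add_comm]

lemma neighborMatrix_finRotate_eq_circulant (N : ℕ) :
    neighborMatrix (finRotate (N + 1)) = circulant (Pi.single (-1) 1 + Pi.single 1 1) := by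
  ext i j
  have succ : i + 1 = j ↔ i - j = -1 := by grind
  have pred : i - 1 = j ↔ i - j = 1 := by grind
  simp [neighborMatrix, circulant_apply, PEquiv.toMatrix_apply, Pi.single_apply, succ, pred]

lemma mul_neighborMatrix_apply [Fintype n] (σ : Equiv.Perm n) (M : Matrix n n ℝ) (i j : n) :
    (M * neighborMatrix σ) i j = M i (σ.symm j) + M i (σ j) := by
  simp [neighborMatrix, Matrix.mul_add, PEquiv.mul_toMatrix_toPEquiv, Equiv.Perm.inv_def]

lemma dotProduct_neighborMatrix_mulVec [Fintype n] (σ : Equiv.Perm n) (x : n → ℝ) :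
    x ⬝ᵥ neighborMatrix σ *ᵥ x = 2 * (x ⬝ᵥ (x ∘ σ)) := by
  rw [neighborMatrix, add_mulVec, dotProduct_add, dotProduct_transpose_mulVec, permMatrix_mulVec]
  ring

lemma posDef_one_sub_smul_neighborMatrix [Finite n] (σ : Equiv.Perm n) {c : ℝ}
    (hc : |c| < 1 / 2) : (1 - c • neighborMatrix σ).PosDef := by
  cases nonempty_fintype n
  refine .of_dotProduct_mulVec_pos ?_ fun x hx => ?_
  · simp [IsHermitian, conjTranspose_eq_transpose_of_trivial, (isSymm_neighborMatrix σ).eq]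
  have hxx : 0 < x ⬝ᵥ x := by simpa using dotProduct_star_self_pos_iff.2 hx
  have bound : c * (x ⬝ᵥ (x ∘ σ)) < 1 / 2 * (x ⬝ᵥ x) :=
    calc c * (x ⬝ᵥ (x ∘ σ)) ≤ |c| * |x ⬝ᵥ (x ∘ σ)| := (le_abs_self _).trans_eq (abs_mul ..)
      _ ≤ |c| * (x ⬝ᵥ x) := by gcongr; exact abs_dotProduct_comp_perm_le σ x
      _ < 1 / 2 * (x ⬝ᵥ x) := by gcongr
  simp only [star_trivial, sub_mulVec, one_mulVec, smul_mulVec, dotProduct_sub, dotProduct_smul,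
    dotProduct_neighborMatrix_mulVec, smul_eq_mul]
  linarith

lemma half_smul_neighborMatrix_mem_rowStochastic [Fintype n] (σ : Equiv.Perm n) :
    (1 / 2 : ℝ) • neighborMatrix σ ∈ rowStochastic ℝ n := by
  rw [neighborMatrix, transpose_permMatrix, smul_add]
  exact convex_rowStochastic permMatrix_mem_rowStochastic permMatrix_mem_rowStochastic
    (by norm_num) (by norm_num) (by norm_num)

lemma abs_neighborMatrix_pow_apply_le [Fintype n] (σ : Equiv.Perm n) (k : ℕ) (i j : n) :
    |(neighborMatrix σ ^ k) i j| ≤ 2 ^ k := by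
  have stochastic := pow_mem (half_smul_neighborMatrix_mem_rowStochastic σ) k
  have rescaled : neighborMatrix σ ^ k = (2 : ℝ) ^ k • ((1 / 2 : ℝ) • neighborMatrix σ) ^ k := by
    rw [smul_pow, smul_smul, ← mul_pow]
    norm_num
  rw [rescaled, Matrix.smul_apply, smul_eq_mul, abs_mul,
    abs_of_nonneg (nonneg_of_mem_rowStochastic stochastic), abs_of_nonneg (by positivity)]
  exact mul_le_of_le_one_right (by positivity) (le_one_of_mem_rowStochastic stochastic)

lemma neighborMatrix_finRotate_pow_zero_apply_eq_zero {N k : ℕ} {j : Fin (N + 1)}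
    (h₁ : k < (j : ℕ)) (h₂ : k + j ≤ N) : (neighborMatrix (finRotate (N + 1)) ^ k) 0 j = 0 := by
  induction k generalizing j with
  | zero => exact one_apply_ne (by rintro rfl; simp at h₁)
  | succ k ih =>
    have pred : ((finRotate (N + 1)).symm j : ℕ) = j - 1 :=
      coe_finRotate_symm_of_ne_zero (by rintro rfl; simp at h₁)
    have succ : (finRotate (N + 1) j : ℕ) = j + 1 :=
      coe_finRotate_of_ne_last (by rintro rfl; simp at h₂)
    rw [pow_succ, mul_neighborMatrix_apply, ih (by omega) (by omega),
      ih (by omega) (by omega), add_zero]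

end NeighborMatrix

section SymmetricMatrix

variable {n α : Type*} [Fintype n] [CommRing α]

lemma mulVec_dotProduct_of_isSymm {M : Matrix n n α} (hM : M.IsSymm) (x y : n → α) :
    M *ᵥ x ⬝ᵥ y = x ⬝ᵥ M *ᵥ y := by
  rw [← vecMul_transpose, hM.eq, dotProduct_mulVec]

lemma mulVec_dotProduct_inv_mulVec [DecidableEq n] {R : Matrix n n α} (hR : R.IsSymm)
    (hR' : IsUnit R.det) (x y : n → α) : R *ᵥ x ⬝ᵥ R⁻¹ *ᵥ y = x ⬝ᵥ y := by
  rw [mulVec_dotProduct_of_isSymm hR, mulVec_mulVec, mul_nonsing_inv R hR', one_mulVec]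

end SymmetricMatrix

section QuadHamiltonian

variable {n : Type*} [Fintype n]

/-- The quadratic Hamiltonian `½ p·Bp + ½ q·Bq` at the phase point `w = (q, p)`. Both `H_Ω` and `Z0`
are of this form, the former with matrix `Ω I`. -/
noncomputable def quadHamiltonian (B : Matrix n n ℝ) (w : (n → ℝ) × (n → ℝ)) : ℝ :=
  1 / 2 * (w.2 ⬝ᵥ B *ᵥ w.2) + 1 / 2 * (w.1 ⬝ᵥ B *ᵥ w.1)

lemma quadHamiltonian_sub (B C : Matrix n n ℝ) (w : (n → ℝ) × (n → ℝ)) :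
    quadHamiltonian (B - C) w = quadHamiltonian B w - quadHamiltonian C w := by
  simp only [quadHamiltonian, sub_mulVec, dotProduct_sub]
  ring

lemma quadHamiltonian_smul_one [DecidableEq n] (c : ℝ) :
    quadHamiltonian (c • (1 : Matrix n n ℝ)) =
      fun w => c / 2 * ∑ j, (w.1 j ^ 2 + w.2 j ^ 2) := by
  have sum_sq (x : n → ℝ) : ∑ j, x j ^ 2 = x ⬝ᵥ x := by simp only [dotProduct, sq]
  ext w
  simp only [quadHamiltonian, smul_mulVec, one_mulVec, dotProduct_smul, smul_eq_mul,
    Finset.sum_add_distrib, sum_sq]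
  ring

lemma sum_sq_add_quadHamiltonian_sub_smul_one [DecidableEq n] (M : Matrix n n ℝ) (c : ℝ)
    (w : (n → ℝ) × (n → ℝ)) :
    c / 2 * ∑ j, (w.1 j ^ 2 + w.2 j ^ 2) + quadHamiltonian (M - c • 1) w =
      quadHamiltonian M w := by
  rw [quadHamiltonian_sub, quadHamiltonian_smul_one, add_sub_cancel]

lemma quadHamiltonian_sq_mulVec [DecidableEq n] {R : Matrix n n ℝ} (hR : R.IsSymm)
    (hR' : IsUnit R.det) (x y : n → ℝ) :
    quadHamiltonian (R ^ 2) (R *ᵥ x, R⁻¹ *ᵥ y) =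
      1 / 2 * (y ⬝ᵥ y) + 1 / 2 * (x ⬝ᵥ R ^ 4 *ᵥ x) := by
  have momentum : R⁻¹ *ᵥ y ⬝ᵥ R ^ 2 *ᵥ R⁻¹ *ᵥ y = y ⬝ᵥ y := by
    rw [sq, ← mulVec_mulVec, ← mulVec_dotProduct_of_isSymm hR, mulVec_mulVec,
      mul_nonsing_inv R hR', one_mulVec]
  have position : R *ᵥ x ⬝ᵥ R ^ 2 *ᵥ R *ᵥ x = x ⬝ᵥ R ^ 4 *ᵥ x := by
    rw [mulVec_dotProduct_of_isSymm hR, mulVec_mulVec, mulVec_mulVec, ← pow_succ', ← pow_succ]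
  rw [quadHamiltonian, momentum, position]

lemma fderiv_quadHamiltonian_apply {B : Matrix n n ℝ} (hB : B.IsSymm)
    (z v : (n → ℝ) × (n → ℝ)) :
    fderiv ℝ (quadHamiltonian B) z v = v.2 ⬝ᵥ B *ᵥ z.2 + v.1 ⬝ᵥ B *ᵥ z.1 := by
  classical
  obtain ⟨β, hβ⟩ : ∃ β : (n → ℝ) →L[ℝ] (n → ℝ) →L[ℝ] ℝ, ∀ x y, β x y = x ⬝ᵥ B *ᵥ y :=
    ⟨LinearMap.toContinuousBilinearMap (toLinearMap₂' (S₂ := ℝ) ℝ B), toLinearMap₂'_apply' B⟩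
  have β_symm (x y : n → ℝ) : β x y = β y x := by
    rw [hβ, hβ, ← mulVec_dotProduct_of_isSymm hB, dotProduct_comm]
  have hfun : quadHamiltonian B = fun w => 1 / 2 * β w.2 w.2 + 1 / 2 * β w.1 w.1 := by
    ext w
    rw [quadHamiltonian, hβ, hβ]
  have hsnd := β.hasFDerivAt_of_bilinear (hasFDerivAt_snd (p := z)) hasFDerivAt_snd
  have hfst := β.hasFDerivAt_of_bilinear (hasFDerivAt_fst (p := z)) hasFDerivAt_fst
  rw [hfun, ((hsnd.const_mul (1 / 2)).fun_add (hfst.const_mul (1 / 2))).fderiv, ← hβ, ← hβ]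
  simp only [ContinuousLinearMap.precompR_apply, ContinuousLinearMap.precompL_apply,
    ContinuousLinearMap.compL_apply, ContinuousLinearMap.comp_apply, ContinuousLinearMap.coe_fst',
    ContinuousLinearMap.coe_snd', _root_.add_apply, _root_.smul_apply, smul_eq_mul, β_symm z.1,
    β_symm z.2]
  ring

lemma pb_quadHamiltonian_of_commute {N : ℕ} {B C : Matrix (Fin N) (Fin N) ℝ} (hB : B.IsSymm)
    (hC : C.IsSymm) (hBC : Commute B C) (z : (Fin N → ℝ) × (Fin N → ℝ)) :
    pb N (quadHamiltonian B) (quadHamiltonian C) z = 0 := by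
  calc pb N (quadHamiltonian B) (quadHamiltonian C) z
      = B *ᵥ z.1 ⬝ᵥ C *ᵥ z.2 - B *ᵥ z.2 ⬝ᵥ C *ᵥ z.1 := by
        simp only [pb, fderiv_quadHamiltonian_apply hB, fderiv_quadHamiltonian_apply hC,
          single_one_dotProduct, zero_dotProduct, zero_add, add_zero, Finset.sum_sub_distrib]
        rfl
    _ = z.1 ⬝ᵥ (B * C) *ᵥ z.2 - z.1 ⬝ᵥ (C * B) *ᵥ z.2 := by
        rw [dotProduct_comm (B *ᵥ z.2), mulVec_dotProduct_of_isSymm hB,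
          mulVec_dotProduct_of_isSymm hC, mulVec_mulVec, mulVec_mulVec]
    _ = 0 := by rw [hBC.eq, sub_self]

end QuadHamiltonian

section RootDecay

variable {n : Type*} [Fintype n] [DecidableEq n]

lemma hasSum_choose_smul_neighborMatrix_pow {R : Matrix n n ℝ} (hR : R.PosDef) {m : ℕ}
    (hm : m ≠ 0) {w μ : ℝ} (hw : 0 < w) (hμ : |μ| < 1 / 2) {σ : Equiv.Perm n}
    (hRm : R ^ m = w ^ m • (1 - μ • neighborMatrix σ)) :
    HasSum (fun k => Ring.choose (m : ℝ)⁻¹ k • (-μ • neighborMatrix σ) ^ k) (w⁻¹ • R) := by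
  have pow_rescaled : (w⁻¹ • R) ^ m = 1 - μ • neighborMatrix σ := by
    rw [smul_pow, hRm, smul_smul, ← mul_pow, inv_mul_cancel₀ hw.ne', one_pow, one_smul]
  have two_sub_pow : (2 - (w⁻¹ • R) ^ m).PosDef := by
    convert posDef_one_sub_smul_neighborMatrix σ (c := -μ) (by rwa [abs_neg]) using 1
    rw [pow_rescaled, ← one_add_one_eq_two]
    module
  have series := hasSum_choose_inv_smul_pow_sub_one (hR.smul (inv_pos.2 hw)) hm two_sub_pow
  have pow_sub_one : (w⁻¹ • R) ^ m - 1 = -μ • neighborMatrix σ := by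
    rw [pow_rescaled]
    module
  simpa only [pow_sub_one, RCLike.ofReal_real_eq_id, id] using series

lemma abs_apply_le_of_pow_eq_smul_one_sub_smul_neighborMatrix {R : Matrix n n ℝ} (hR : R.PosDef)
    {m : ℕ} (hm : m ≠ 0) {w μ : ℝ} (hw : 0 < w) (hμ : |μ| < 1 / 2) {σ : Equiv.Perm n}
    (hRm : R ^ m = w ^ m • (1 - μ • neighborMatrix σ)) {i j : n} {d : ℕ}
    (hd : ∀ k < d, (neighborMatrix σ ^ k) i j = 0) :
    |R i j| ≤ 2 * w * (2 * |μ|) ^ d := by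
  have entry_hasSum := Pi.hasSum.1 (Pi.hasSum.1
    (hasSum_choose_smul_neighborMatrix_pow hR hm hw hμ hRm) i) j
  have inv_natCast_le_one : (m : ℝ)⁻¹ ≤ 1 := Nat.cast_inv_le_one m
  have rescaled : |w⁻¹ * R i j| ≤ 2 * (2 * |μ|) ^ d := by
    refine norm_le_mul_pow_of_hasSum entry_hasSum (by positivity) (by linarith)
      (sum_abs_choose_le_two (by positivity) inv_natCast_le_one) (fun k => ?_) fun k hk => ?_
    · simp only [smul_pow, Matrix.smul_apply, smul_eq_mul, Real.norm_eq_abs, abs_mul, abs_pow,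
        abs_neg, mul_pow, mul_comm (2 : ℝ)]
      gcongr
      exact abs_neighborMatrix_pow_apply_le σ k i j
    · simp only [smul_pow, Matrix.smul_apply, hd k hk, smul_zero]
  calc |R i j| = w * |w⁻¹ * R i j| := by
        rw [abs_mul, abs_of_pos (inv_pos.2 hw), mul_inv_cancel_left₀ hw.ne']
    _ ≤ w * (2 * (2 * |μ|) ^ d) := by gcongr
    _ = 2 * w * (2 * |μ|) ^ d := by ring

end RootDecay

lemma abs_div_one_add_two_mul_lt_half {a : ℝ} (ha : -(1 / 4) < a) :
    |a / (1 + 2 * a)| < 1 / 2 := by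
  have denom_pos : 0 < 1 + 2 * a := by linarith
  rw [abs_div, abs_of_pos denom_pos, div_lt_iff₀ denom_pos, abs_lt]
  constructor <;> linarith

lemma sqrt_sqrt_pow_four {x : ℝ} (hx : 0 ≤ x) : √(√x) ^ 4 = x := by
  rw [pow_mul _ 2 2, Real.sq_sqrt x.sqrt_nonneg, Real.sq_sqrt hx]

theorem stmt6_general (N : ℕ) (hN : 1 ≤ N) (a : ℝ) (ha : -(1 / 4) < a)
    (ω μ : ℝ) (hω : ω = Real.sqrt (1 + 2 * a)) (hμdef : μ = a / (1 + 2 * a))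
    (τm A : Matrix (Fin N) (Fin N) ℝ)
    (hτ : τm = Matrix.of fun i j : Fin N => if i = finRotate N j then (1 : ℝ) else 0)
    (hA : A = (1 + 2 * a) • ((1 : Matrix (Fin N) (Fin N) ℝ) - μ • (τm + τmᵀ))) :
    A.IsSymm ∧ A.PosDef ∧ (∃ v : Fin N → ℝ, A = Matrix.circulant v) ∧
    ∀ R : Matrix (Fin N) (Fin N) ℝ, R.PosDef → R ^ 4 = A →
      ∀ Ωv : ℝ, Ωv = Matrix.trace (R ^ 2) / N →
        ∀ B : Matrix (Fin N) (Fin N) ℝ, B = R ^ 2 - Ωv • (1 : Matrix (Fin N) (Fin N) ℝ) →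
          (∀ x y x' y' : Fin N → ℝ,
            R.mulVec x ⬝ᵥ R⁻¹.mulVec y' - R⁻¹.mulVec y ⬝ᵥ R.mulVec x' =
              x ⬝ᵥ y' - y ⬝ᵥ x') ∧
          (∀ x y : Fin N → ℝ,
            (1 / 2) * (y ⬝ᵥ y) + (1 / 2) * (x ⬝ᵥ A.mulVec x) =
              (Ωv / 2) * (∑ j, ((R.mulVec x) j ^ 2 + (R⁻¹.mulVec y) j ^ 2)) +
              ((1 / 2) * (R⁻¹.mulVec y ⬝ᵥ B.mulVec (R⁻¹.mulVec y)) +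
                (1 / 2) * (R.mulVec x ⬝ᵥ B.mulVec (R.mulVec x)))) ∧
          (∀ z : (Fin N → ℝ) × (Fin N → ℝ),
            pb N (fun w => (Ωv / 2) * ∑ j, (w.1 j ^ 2 + w.2 j ^ 2))
              (fun w => (1 / 2) * (w.2 ⬝ᵥ B.mulVec w.2) + (1 / 2) * (w.1 ⬝ᵥ B.mulVec w.1))
              z = 0) ∧
          (∀ j : ℕ, (hj1 : 1 ≤ j) → (hj2 : j ≤ N / 2 + 1) →
            |R ⟨0, by omega⟩ ⟨j - 1, by omega⟩| ≤ 2 * Real.sqrt ω * (2 * |μ|) ^ (j - 1)) := by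
  obtain ⟨n, rfl⟩ := Nat.exists_eq_add_of_le' hN
  have h2a : 0 < 1 + 2 * a := by linarith
  have hμ : |μ| < 1 / 2 := hμdef ▸ abs_div_one_add_two_mul_lt_half ha
  rw [← neighborMatrix_eq_add_transpose hτ] at hA
  refine ⟨?_, ?_, ?_, fun R hR hR4 Ωv _ B hB => ?_⟩
  · exact hA ▸ (isSymm_one.sub ((isSymm_neighborMatrix _).smul μ)).smul _
  · exact hA ▸ (posDef_one_sub_smul_neighborMatrix _ hμ).smul h2a
  · exact ⟨_, by rw [hA, neighborMatrix_finRotate_eq_circulant, ← circulant_single_one,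
      ← circulant_smul, ← circulant_sub, ← circulant_smul]⟩
  have hRs : R.IsSymm := isHermitian_iff_isSymm.1 hR.isHermitian
  have hRdet : IsUnit R.det := (isUnit_iff_isUnit_det R).1 hR.isUnit
  have hBs : B.IsSymm := hB ▸ (hRs.pow 2).sub (isSymm_one.smul Ωv)
  refine ⟨fun x y x' y' => ?_, fun x y => ?_, fun z => ?_, fun j hj1 hj2 => ?_⟩
  · rw [mulVec_dotProduct_inv_mulVec hRs hRdet, dotProduct_comm (R⁻¹ *ᵥ y),
      mulVec_dotProduct_inv_mulVec hRs hRdet, dotProduct_comm x']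
  · rw [← hR4, ← quadHamiltonian_sq_mulVec hRs hRdet, hB]
    exact (sum_sq_add_quadHamiltonian_sub_smul_one _ _ (_, _)).symm
  · rw [← quadHamiltonian_smul_one]
    exact pb_quadHamiltonian_of_commute (isSymm_one.smul Ωv) hBs
      ((Commute.one_left B).smul_left Ωv) z
  · exact abs_apply_le_of_pow_eq_smul_one_sub_smul_neighborMatrix hR four_ne_zero
      (Real.sqrt_pos.2 (hω ▸ Real.sqrt_pos.2 h2a)) hμ
      (by rw [hR4, hA, hω, sqrt_sqrt_pow_four h2a.le])
      fun k hk => neighborMatrix_finRotate_pow_zero_apply_eq_zero hk (by dsimp only; omega)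

/-- for `N ≥ 3`, `a > 0`, `ω² = 1+2a`, `μ = a/ω² < 1/2`, `τ` the cyclic
permutation matrix and `A = ω²(I − μ(τ + τᵀ))`: `A` is symmetric, positive definite
and circulant; for `R = A^{1/4}` (the positive-definite fourth root), the linear
change `q = Rx`, `p = R⁻¹y` is canonical (preserves the symplectic form) and puts
`H0 = ½y·y + ½x·Ax` in the form `H_Ω + Z0`, where `Ω` is the average of the square
roots of the eigenvalues of `A` (i.e. `trace(A^{1/2})/N`), `H_Ω = (Ω/2)Σ(q_j²+p_j²)`,
`Z0 = ½p·Bp + ½q·Bq` with `B = A^{1/2} − ΩI`, and `{H_Ω, Z0} = 0`; moreover the first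
row of `A^{1/4}` satisfies `|(A^{1/4})_{1,j}| ≤ 2√ω (2μ)^{j−1}` for `1 ≤ j ≤ ⌊N/2⌋+1`. -/
theorem stmt6 (N : ℕ) (hN : 3 ≤ N) (a : ℝ) (ha : 0 < a)
    (ω μ : ℝ) (hω : ω = Real.sqrt (1 + 2 * a)) (hμdef : μ = a / (1 + 2 * a))
    (hμ : μ < 1 / 2)
    (τm A : Matrix (Fin N) (Fin N) ℝ)
    (hτ : τm = Matrix.of fun i j : Fin N => if i = finRotate N j then (1 : ℝ) else 0)
    (hA : A = (1 + 2 * a) • ((1 : Matrix (Fin N) (Fin N) ℝ) - μ • (τm + τmᵀ))) :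
    A.IsSymm ∧ A.PosDef ∧ (∃ v : Fin N → ℝ, A = Matrix.circulant v) ∧
    ∀ R : Matrix (Fin N) (Fin N) ℝ, R.PosDef → R ^ 4 = A →
      ∀ Ωv : ℝ, Ωv = Matrix.trace (R ^ 2) / N →
        ∀ B : Matrix (Fin N) (Fin N) ℝ, B = R ^ 2 - Ωv • (1 : Matrix (Fin N) (Fin N) ℝ) →
          -- the transformation is canonical: it preserves the symplectic form
          (∀ x y x' y' : Fin N → ℝ,
            R.mulVec x ⬝ᵥ R⁻¹.mulVec y' - R⁻¹.mulVec y ⬝ᵥ R.mulVec x' =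
              x ⬝ᵥ y' - y ⬝ᵥ x') ∧
          -- H0 is transformed into H_Ω + Z0
          (∀ x y : Fin N → ℝ,
            (1 / 2) * (y ⬝ᵥ y) + (1 / 2) * (x ⬝ᵥ A.mulVec x) =
              (Ωv / 2) * (∑ j, ((R.mulVec x) j ^ 2 + (R⁻¹.mulVec y) j ^ 2)) +
              ((1 / 2) * (R⁻¹.mulVec y ⬝ᵥ B.mulVec (R⁻¹.mulVec y)) +
                (1 / 2) * (R.mulVec x ⬝ᵥ B.mulVec (R.mulVec x)))) ∧
          -- `{H_Ω, Z0} = 0`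
          (∀ z : (Fin N → ℝ) × (Fin N → ℝ),
            pb N (fun w => (Ωv / 2) * ∑ j, (w.1 j ^ 2 + w.2 j ^ 2))
              (fun w => (1 / 2) * (w.2 ⬝ᵥ B.mulVec w.2) + (1 / 2) * (w.1 ⬝ᵥ B.mulVec w.1))
              z = 0) ∧
          -- exponential decay of the first row of `A^{1/4}`
          (∀ j : ℕ, (hj1 : 1 ≤ j) → (hj2 : j ≤ N / 2 + 1) →
            |R ⟨0, by omega⟩ ⟨j - 1, by omega⟩| ≤ 2 * Real.sqrt ω * (2 * μ) ^ (j - 1)) := by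
  have h := stmt6_general N (by omega) a (by linarith) ω μ hω hμdef τm A hτ hA
  rwa [abs_of_nonneg (hμdef ▸ by positivity)] at h
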